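/- Let p be a prime and let A be a random n×m matrix (m ≥ n) over the p-adic integers ℤ_p, whose entries are independent and identically distributed according to the Haar probability measure on ℤ_p. Then P(A : ℤ_p^m → ℤ_p^n is surjective) = ∏_{k=m+1−n}^{m} (1 − p^(−k)). -/

import Mathlib

/-!
A square matrix over a local ring `R` is invertible as soon as its reduction to the residue field
`k` is, so an `n × m` matrix over `R` is surjective if and only if the rows of its reduction are
linearly independent over `k`. Reduction is a surjective homomorphism of additive groups onto the
finite group of `n × m` matrices over `k`, so it carries an invariant probability measure to the
uniform one, and it remains to count linearly independent `n`-tuples in `k ^ m`.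
-/

open MeasureTheory Filter

noncomputable instance (p : ℕ) [Fact p.Prime] : MeasurableSpace ℤ_[p] := borel _

instance (p : ℕ) [Fact p.Prime] : BorelSpace ℤ_[p] := ⟨rfl⟩

open IsLocalRing

section Matrix

variable {m n : Type*} [Fintype m] [Finite n]

lemma mulVec_surjective_iff_linearIndependent_row {K : Type*} [Field K] (B : Matrix n m K) :
    Function.Surjective B.mulVec ↔ LinearIndependent K B.row := by
  cases nonempty_fintype n
  rw [linearIndependent_iff_card_eq_finrank_span, Set.finrank, ← Matrix.rank_eq_finrank_span_row,
    ← Matrix.coe_mulVecLin, ← LinearMap.range_eq_top, Submodule.eq_top_iff_finrank_eq,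
    Module.finrank_fintype_fun_eq_card, eq_comm, Matrix.rank]

lemma mulVec_surjective_map_iff {R S : Type*} [CommRing R] [CommRing S] (f : R →+* S)
    [IsLocalHom f] (hf : Function.Surjective f) (A : Matrix n m R) :
    Function.Surjective (A.map f).mulVec ↔ Function.Surjective A.mulVec := by
  classical
  cases nonempty_fintype n
  simp only [Matrix.mulVec_surjective_iff_exists_right_inverse]
  constructor
  · rintro ⟨B, hB⟩
    obtain ⟨C, rfl⟩ : ∃ C : Matrix m n R, C.map f = B := hf.comp_left.comp_left B
    rw [← Matrix.map_mul] at hB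
    have hdet : IsUnit (A * C).det := by
      apply isUnit_of_map_unit f
      rw [RingHom.map_det, RingHom.mapMatrix_apply, hB, Matrix.det_one]
      exact isUnit_one
    exact ⟨C * (A * C)⁻¹, by rw [← Matrix.mul_assoc, Matrix.mul_nonsing_inv _ hdet]⟩
  · rintro ⟨C, hC⟩
    exact ⟨C.map f, by rw [← Matrix.map_mul, hC, Matrix.map_one _ f.map_zero f.map_one]⟩

lemma mulVec_surjective_iff_linearIndependent_row_residue {R : Type*} [CommRing R] [IsLocalRing R]
    (A : Matrix n m R) :
    Function.Surjective A.mulVec ↔ LinearIndependent (ResidueField R) (A.map (residue R)).row := by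
  rw [← mulVec_surjective_iff_linearIndependent_row,
    mulVec_surjective_map_iff (residue R) residue_surjective]

end Matrix

section Counting

lemma prod_pow_sub_pow_eq_mul_prod_Icc {F : Type*} [Field F] {q : F} (hq : q ≠ 0) {n d : ℕ}
    (hn : n ≤ d) :
    ∏ i ∈ Finset.range n, (q ^ d - q ^ i) =
      (q ^ d) ^ n * ∏ k ∈ Finset.Icc (d + 1 - n) d, (1 - q⁻¹ ^ k) := by
  have hfactor : ∀ i ∈ Finset.range n, q ^ d - q ^ i = q ^ d * (1 - q⁻¹ ^ (d - i)) := by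
    intro i hi
    have hid : i ≤ d := (Finset.mem_range.1 hi).le.trans hn
    rw [mul_sub, mul_one, inv_pow, pow_sub₀ q hq hid]
    field_simp
  rw [Finset.prod_congr rfl hfactor, Finset.prod_mul_distrib, Finset.prod_const, Finset.card_range,
    Finset.range_eq_Ico, Finset.prod_Ico_reflect (fun k => 1 - q⁻¹ ^ k) 0 (by omega),
    Nat.sub_zero, Finset.Ico_add_one_right_eq_Icc]

variable {K V : Type*} [Field K] [Finite K] [AddCommGroup V] [Module K V] [Finite V]

lemma ncard_linearIndependent_div_card {n : ℕ} (hn : n ≤ Module.finrank K V) :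
    ({v : Fin n → V | LinearIndependent K v}.ncard : ℝ) / Nat.card (Fin n → V) =
      ∏ k ∈ Finset.Icc (Module.finrank K V + 1 - n) (Module.finrank K V),
        (1 - (Nat.card K : ℝ)⁻¹ ^ k) := by
  have := Fintype.ofFinite K
  have hq : (Nat.card K : ℝ) ≠ 0 := Nat.cast_ne_zero.2 Nat.card_pos.ne'
  have hcount : ({v : Fin n → V | LinearIndependent K v}.ncard : ℝ) =
      ∏ i ∈ Finset.range n, ((Nat.card K : ℝ) ^ Module.finrank K V - Nat.card K ^ i) := by
    rw [← Nat.card_coe_set_eq, Set.coe_ofPred, card_linearIndependent hn, Nat.cast_prod,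
      ← Fin.prod_univ_eq_prod_range]
    refine Finset.prod_congr rfl fun i _ => ?_
    rw [← Nat.card_eq_fintype_card,
      Nat.cast_sub (Nat.pow_le_pow_right Nat.card_pos (i.isLt.le.trans hn)),
      Nat.cast_pow, Nat.cast_pow]
  have hcard : (Nat.card (Fin n → V) : ℝ) = ((Nat.card K : ℝ) ^ Module.finrank K V) ^ n := by
    rw [Nat.card_fun, Nat.card_fin, Module.natCard_eq_pow_finrank (K := K), Nat.cast_pow,
      Nat.cast_pow]
  rw [hcount, hcard, prod_pow_sub_pow_eq_mul_prod_Icc hq hn,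
    mul_div_cancel_left₀ _ (pow_ne_zero _ (pow_ne_zero _ hq))]

end Counting

section Measure

variable {G H : Type*} [AddGroup G] [AddGroup H]

lemma exists_preimage_singleton_eq_preimage_ker {f : G →+ H} (hf : Function.Surjective f) (h : H) :
    ∃ g : G, f ⁻¹' {h} = (g + ·) ⁻¹' (f.ker : Set G) := by
  obtain ⟨g, hg⟩ := hf (-h)
  refine ⟨g, Set.ext fun x => ?_⟩
  rw [Set.mem_preimage, Set.mem_singleton_iff, Set.mem_preimage, SetLike.mem_coe,
    AddMonoidHom.mem_ker, map_add, hg, neg_add_eq_zero, eq_comm]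

variable [MeasurableSpace G] [MeasurableAdd G] [Finite H] (μ : Measure G) [IsProbabilityMeasure μ]
  [μ.IsAddLeftInvariant] {f : G →+ H}

lemma measureReal_ker_eq_inv_card (hf : Function.Surjective f)
    (hker : MeasurableSet (f.ker : Set G)) : μ.real (f.ker : Set G) = (Nat.card H : ℝ)⁻¹ := by
  have hindex : f.ker.index = Nat.card H := by
    rw [AddSubgroup.index_ker, AddMonoidHom.range_eq_top.2 hf, AddSubgroup.card_top]
  have : f.ker.FiniteIndex := ⟨hindex ▸ Nat.card_pos.ne'⟩
  have hmul : μ f.ker * Nat.card H = 1 := by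
    rw [mul_comm, ← hindex, f.ker.index_mul_measure hker μ, measure_univ]
  rw [measureReal_def, ENNReal.eq_inv_of_mul_eq_one_left hmul, ENNReal.toReal_inv,
    ENNReal.toReal_natCast]

lemma measureReal_preimage_eq_ncard_div_card (hf : Function.Surjective f)
    (hker : MeasurableSet (f.ker : Set G)) (S : Set H) :
    μ.real (f ⁻¹' S) = S.ncard / Nat.card H := by
  have hmeas (h : H) : MeasurableSet (f ⁻¹' {h}) := by
    obtain ⟨g, hg⟩ := exists_preimage_singleton_eq_preimage_ker hf h
    exact hg ▸ measurable_const_add g hker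
  have hfiber (h : H) : μ.real (f ⁻¹' {h}) = (Nat.card H : ℝ)⁻¹ := by
    obtain ⟨g, hg⟩ := exists_preimage_singleton_eq_preimage_ker hf h
    rw [hg, measureReal_def, measure_preimage_add, ← measureReal_def,
      measureReal_ker_eq_inv_card μ hf hker]
  lift S to Finset H using S.toFinite
  rw [← sum_measureReal_preimage_singleton S fun h _ => hmeas h,
    Finset.sum_congr rfl fun h _ => hfiber h, Finset.sum_const, nsmul_eq_mul,
    Set.ncard_coe_finset, div_eq_mul_inv]

end Measure

theorem stmt10_general {R : Type*} [CommRing R] [IsLocalRing R] [Finite (ResidueField R)]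
    [MeasurableSpace R] [MeasurableAdd R] (hR : MeasurableSet (maximalIdeal R : Set R))
    (μ : Measure R) [IsProbabilityMeasure μ] [μ.IsAddLeftInvariant] {n m : ℕ} (hnm : n ≤ m) :
    (Measure.pi fun _ : Fin n => Measure.pi fun _ : Fin m => μ).real
        {A | Function.Surjective (Matrix.of A).mulVecLin} =
      ∏ k ∈ Finset.Icc (m + 1 - n) m, (1 - (Nat.card (ResidueField R) : ℝ)⁻¹ ^ k) := by
  let reduction : (Fin n → Fin m → R) →+ (Fin n → Fin m → ResidueField R) :=
    ((residue R).toAddMonoidHom.compLeft (Fin m)).compLeft (Fin n)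
  have hsurj : Function.Surjective reduction :=
    (residue_surjective.comp_left).comp_left
  have hker : MeasurableSet (reduction.ker : Set (Fin n → Fin m → R)) := by
    have : (reduction.ker : Set (Fin n → Fin m → R)) =
        Set.univ.pi fun _ => Set.univ.pi fun _ => (maximalIdeal R : Set R) := by
      ext A
      simp [reduction, AddMonoidHom.mem_ker, funext_iff]
    rw [this]
    exact .univ_pi fun _ => .univ_pi fun _ => hR
  have hpre : {A | Function.Surjective (Matrix.of A).mulVecLin} =
      reduction ⁻¹' {B | LinearIndependent (ResidueField R) B} :=
    Set.ext fun A => mulVec_surjective_iff_linearIndependent_row_residue (Matrix.of A)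
  rw [hpre, measureReal_preimage_eq_ncard_div_card _ hsurj hker,
    ncard_linearIndependent_div_card (by simpa using hnm), Module.finrank_fin_fun]

theorem stmt10 (p : ℕ) [Fact p.Prime] (n m : ℕ) (hnm : n ≤ m)
    (μ : Measure ℤ_[p]) [IsProbabilityMeasure μ] [μ.IsAddHaarMeasure] :
    ((Measure.pi fun _ : Fin n => Measure.pi fun _ : Fin m => μ)
        {A | Function.Surjective (Matrix.of A).mulVecLin}).toReal =
      ∏ k ∈ Finset.Icc (m + 1 - n) m, (1 - (p : ℝ)⁻¹ ^ k) := by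
  simpa only [Nat.card_congr PadicInt.residueField.toEquiv, Nat.card_zmod, measureReal_def] using
    stmt10_general (isOpen_maximalIdeal ℤ_[p]).measurableSet μ hnm
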